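/- Let n and k be positive integers with i·n = 7k for some i ∈ {1,2,3} and 2k < n, and suppose that either n ≥ 42 or (n,k) ∈ {(28,8),(35,10),(35,15)}. Then for every outer vertex a_j of GP(n,k), there are exactly 20 vertices at graph distance exactly 4 from a_j; moreover the only coincidences among the 24 endpoints of the paths of length 4 from a_j through distinct neighbours are the four pairs given by the vertices a_{j-k-1}, a_{j+k-1}, a_{j-k+1} and a_{j+k+1}, each of which is reached by exactly two such paths. -/

import Mathlib

open SimpleGraph

/-- Vertices of the generalised Petersen graph: `Sum.inl j` is the outer vertex `a_j`,
`Sum.inr j` is the inner vertex `b_j`. -/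
abbrev GPVertex (n : ℕ) := ZMod n ⊕ ZMod n

/-- The defining relation of the edges of `GP(n,k)`. -/
def GPRel (n k : ℕ) : GPVertex n → GPVertex n → Prop
  | Sum.inl i, Sum.inl j => j = i + 1
  | Sum.inl i, Sum.inr j => j = i
  | Sum.inr i, Sum.inr j => j = i + (k : ZMod n)
  | _, _ => False

/-- The generalised Petersen graph `GP(n,k)`. -/
def GP (n k : ℕ) : SimpleGraph (GPVertex n) := SimpleGraph.fromRel (GPRel n k)

/-- The four outer vertices at distance `4` from `a_j` that are each reached via two
distinct neighbours of `a_j`. -/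
def outerDoubled (n k : ℕ) (j : ZMod n) : Set (GPVertex n) :=
  {Sum.inl (j - (k : ZMod n) - 1), Sum.inl (j + (k : ZMod n) - 1),
   Sum.inl (j - (k : ZMod n) + 1), Sum.inl (j + (k : ZMod n) + 1)}

/-!
`GP(n,k)` is a quotient of the I-graph of `ℤ × ℤ` with steps `(1, 0)` and `(0, 1)`, via
`(x, y) ↦ j + x + y * k`. Distances in that infinite graph are given by a closed formula: the
`ℓ¹`-distance plus the number of spokes one has to use. The quotient map is locally surjective, so
geodesics lift along it, and it therefore preserves distances inside any ball on which it is
injective. Two points of the ball of radius four can only be identified by a relation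
`x + y * k = 0` in `ZMod n` with `0 < |x| + |y| ≤ 6`, so in the absence of such relations the
count can be carried out in the infinite graph. The relation `7 * k = i * n` has length `7`, and
the hypotheses on `n` and `k` exclude anything shorter.
-/

section LocallySurjective

variable {V W : Type*} {G : SimpleGraph V} {H : SimpleGraph W} {f : V → W}

/-- A map of graphs is locally surjective if it maps the neighbours of each vertex onto the
neighbours of its image; such a map is in particular a graph homomorphism. -/
def LocallySurjective (G : SimpleGraph V) (H : SimpleGraph W) (f : V → W) : Prop :=
  ∀ v, H.neighborSet (f v) = f '' G.neighborSet v

namespace LocallySurjective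

theorem adj_iff (hf : LocallySurjective G H f) {v : V} {w : W} :
    H.Adj (f v) w ↔ ∃ q, G.Adj v q ∧ f q = w :=
  Set.ext_iff.1 (hf v) w

/-- A locally surjective map as a graph homomorphism. -/
def toHom (hf : LocallySurjective G H f) : G →g H where
  toFun := f
  map_rel' h := hf.adj_iff.2 ⟨_, h, rfl⟩

theorem connected (hf : LocallySurjective G H f) (hsurj : Function.Surjective f)
    (hG : G.Connected) : H.Connected :=
  hG.map hf.toHom hsurj

theorem exists_walk_lift (hf : LocallySurjective G H f) {a w : W} (c : H.Walk a w) :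
    ∀ v, f v = a → ∃ q, f q = w ∧ ∃ c' : G.Walk v q, c'.length = c.length := by
  induction c with
  | nil => exact fun v hv => ⟨v, hv, Walk.nil, rfl⟩
  | cons hadj _ ih =>
    rintro v rfl
    obtain ⟨p, hvp, hp⟩ := hf.adj_iff.1 hadj
    obtain ⟨q, hq, c', hc'⟩ := ih p hp
    exact ⟨q, hq, c'.cons hvp, by rw [Walk.length_cons, Walk.length_cons, hc']⟩

theorem dist_map_le (hf : LocallySurjective G H f) (hG : G.Connected) (p q : V) :
    H.dist (f p) (f q) ≤ G.dist p q := by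
  obtain ⟨c, hc⟩ := hG.exists_walk_length_eq_dist p q
  calc H.dist (f p) (f q) ≤ (c.map hf.toHom).length := dist_le _
    _ = G.dist p q := by rw [Walk.length_map, hc]

theorem exists_dist_eq (hf : LocallySurjective G H f) (hG : G.Connected) (hH : H.Connected)
    (p : V) (w : W) : ∃ q, f q = w ∧ G.dist p q = H.dist (f p) w := by
  obtain ⟨c, hc⟩ := hH.exists_walk_length_eq_dist (f p) w
  obtain ⟨q, rfl, c', hc'⟩ := hf.exists_walk_lift c p rfl
  refine ⟨q, rfl, le_antisymm ?_ (hf.dist_map_le hG p q)⟩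
  calc G.dist p q ≤ c'.length := dist_le c'
    _ = H.dist (f p) (f q) := hc'.trans hc

variable {u : V} {r : ℕ}

theorem dist_map_eq_iff (hf : LocallySurjective G H f) (hG : G.Connected) (hH : H.Connected)
    (hinj : Set.InjOn f {q | G.dist u q ≤ r}) {p q : V} {d : ℕ} (hq : G.dist u q ≤ r)
    (hp : G.dist u p + d ≤ r) : H.dist (f p) (f q) = d ↔ G.dist p q = d := by
  suffices h : H.dist (f p) (f q) ≤ d → H.dist (f p) (f q) = G.dist p q by
    have hle := hf.dist_map_le hG p q
    exact ⟨fun hd => h hd.le ▸ hd, fun hd => h (hd ▸ hle) ▸ hd⟩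
  intro hd
  obtain ⟨q', hq', hdist⟩ := hf.exists_dist_eq hG hH p (f q)
  have htri : G.dist u q' ≤ G.dist u p + G.dist p q' := hG.dist_triangle
  have hq'r : G.dist u q' ≤ r := by omega
  rw [← hdist, hinj hq'r hq hq']

theorem sphere_eq_image (hf : LocallySurjective G H f) (hG : G.Connected) (hH : H.Connected)
    (hinj : Set.InjOn f {q | G.dist u q ≤ r}) :
    {w | H.dist (f u) w = r} = f '' {q | G.dist u q = r} := by
  ext w
  constructor
  · rintro rfl
    obtain ⟨q, hq, hdist⟩ := hf.exists_dist_eq hG hH u w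
    exact ⟨q, hdist, hq⟩
  · rintro ⟨q, hq, rfl⟩
    exact (hf.dist_map_eq_iff hG hH hinj (Set.mem_ofPred_eq ▸ hq).le (by simp)).2 hq

theorem ncard_sphere (hf : LocallySurjective G H f) (hG : G.Connected) (hH : H.Connected)
    (hinj : Set.InjOn f {q | G.dist u q ≤ r}) :
    {w | H.dist (f u) w = r}.ncard = {q | G.dist u q = r}.ncard := by
  rw [hf.sphere_eq_image hG hH hinj]
  exact (hinj.mono fun _ hq => le_of_eq hq).ncard_image

theorem ncard_adj_dist (hf : LocallySurjective G H f) (hG : G.Connected) (hH : H.Connected)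
    (hinj : Set.InjOn f {q | G.dist u q ≤ r + 1}) {q : V} (hq : G.dist u q ≤ r + 1) :
    {v | H.Adj (f u) v ∧ H.dist v (f q) = r}.ncard =
      {p | G.Adj u p ∧ G.dist p q = r}.ncard := by
  have hdist {p : V} (hp : G.Adj u p) : H.dist (f p) (f q) = r ↔ G.dist p q = r :=
    hf.dist_map_eq_iff hG hH hinj hq (by rw [dist_eq_one_iff_adj.2 hp, add_comm])
  have himage : {v | H.Adj (f u) v ∧ H.dist v (f q) = r} =
      f '' {p | G.Adj u p ∧ G.dist p q = r} := by
    ext v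
    constructor
    · rintro ⟨hv, hvq⟩
      obtain ⟨p, hp, rfl⟩ := hf.adj_iff.1 hv
      exact ⟨p, ⟨hp, (hdist hp).1 hvq⟩, rfl⟩
    · rintro ⟨p, ⟨hp, hpq⟩, rfl⟩
      exact ⟨hf.adj_iff.2 ⟨p, hp, rfl⟩, (hdist hp).2 hpq⟩
  rw [himage]
  refine (hinj.mono fun p hp => ?_).ncard_image
  have : G.dist u p = 1 := dist_eq_one_iff_adj.2 hp.1
  exact this.trans_le (by omega)

end LocallySurjective

end LocallySurjective

section Descent

variable {V : Type*} {G : SimpleGraph V} {φ : V → ℕ} {u : V}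

theorem le_add_length_of_lipschitz (hlip : ∀ v w, G.Adj v w → φ w ≤ φ v + 1) {v w : V}
    (c : G.Walk v w) : φ w ≤ φ v + c.length := by
  induction c with
  | nil => simp
  | cons hadj _ ih =>
    have := hlip _ _ hadj
    rw [Walk.length_cons]
    omega

theorem exists_walk_length_le_of_descent
    (hdesc : ∀ v, v ≠ u → ∃ w, G.Adj v w ∧ φ w < φ v) (v : V) :
    ∃ c : G.Walk v u, c.length ≤ φ v := by
  induction hn : φ v using Nat.strong_induction_on generalizing v with
  | _ n ih =>
    obtain rfl | hne := eq_or_ne v u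
    · exact ⟨Walk.nil, by simp⟩
    · obtain ⟨w, hadj, hlt⟩ := hdesc v hne
      obtain ⟨c, hc⟩ := ih (φ w) (hn ▸ hlt) w rfl
      exact ⟨c.cons hadj, by rw [Walk.length_cons]; omega⟩

theorem dist_eq_of_lipschitz_of_descent (h0 : φ u = 0)
    (hlip : ∀ v w, G.Adj v w → φ w ≤ φ v + 1)
    (hdesc : ∀ v, v ≠ u → ∃ w, G.Adj v w ∧ φ w < φ v) (v : V) : G.dist u v = φ v := by
  obtain ⟨c, hc⟩ := exists_walk_length_le_of_descent hdesc v
  obtain ⟨c', hc'⟩ := c.reverse.reachable.exists_walk_length_eq_dist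
  have hupper : G.dist u v ≤ c.length := dist_comm (G := G) ▸ dist_le c
  have hlower := le_add_length_of_lipschitz hlip c'
  omega

end Descent

section IGraph

variable {A : Type*} [AddCommGroup A] {s t : A}

/-- The I-graph over an abelian group `A` with outer step `s` and inner step `t`: there are edges
`a_i a_{i+s}`, `a_i b_i` and `b_i b_{i+t}`, where `a_i` is `Sum.inl i` and `b_i` is `Sum.inr i`.
Both `GP(n,k)` and its infinite cover are of this form. -/
def iGraph (s t : A) : SimpleGraph (A ⊕ A) :=
  fromRel fun
    | Sum.inl i, Sum.inl j => j = i + s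
    | Sum.inl i, Sum.inr j => j = i
    | Sum.inr i, Sum.inr j => j = i + t
    | _, _ => False

theorem GP_eq_iGraph (n k : ℕ) : GP n k = iGraph (1 : ZMod n) (k : ZMod n) := by
  refine congrArg fromRel ?_
  ext (i | i) (j | j) <;> rfl

theorem iGraph_neighborSet_inl (hs : s ≠ 0) (i : A) :
    (iGraph s t).neighborSet (Sum.inl i) = {Sum.inl (i + s), Sum.inl (i - s), Sum.inr i} := by
  ext (j | j)
  · simp only [iGraph, mem_neighborSet, fromRel_adj, ne_eq, Sum.inl.injEq, Set.mem_insert_iff,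
      Set.mem_singleton_iff, reduceCtorEq, or_false, eq_sub_iff_add_eq, eq_comm (a := i)]
    refine and_iff_right_of_imp ?_
    rintro (rfl | rfl) <;> simp [hs]
  · simp [iGraph]

theorem iGraph_neighborSet_inr (ht : t ≠ 0) (i : A) :
    (iGraph s t).neighborSet (Sum.inr i) = {Sum.inl i, Sum.inr (i + t), Sum.inr (i - t)} := by
  ext (j | j)
  · simp [iGraph, eq_comm]
  · simp only [iGraph, mem_neighborSet, fromRel_adj, ne_eq, Sum.inr.injEq, Set.mem_insert_iff,
      Set.mem_singleton_iff, reduceCtorEq, false_or, eq_sub_iff_add_eq, eq_comm (a := i)]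
    refine and_iff_right_of_imp ?_
    rintro (rfl | rfl) <;> simp [ht]

end IGraph

section Lattice

/-- The universal abelian cover of the I-graphs: the I-graph of `ℤ × ℤ` with the two unit vectors
as steps. -/
def latticeIGraph : SimpleGraph ((ℤ × ℤ) ⊕ (ℤ × ℤ)) := iGraph (1, 0) (0, 1)

theorem latticeIGraph_neighborSet_inl (x y : ℤ) :
    latticeIGraph.neighborSet (Sum.inl (x, y)) =
      {Sum.inl (x + 1, y), Sum.inl (x - 1, y), Sum.inr (x, y)} := by
  simp [latticeIGraph, iGraph_neighborSet_inl]

theorem latticeIGraph_neighborSet_inr (x y : ℤ) :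
    latticeIGraph.neighborSet (Sum.inr (x, y)) =
      {Sum.inl (x, y), Sum.inr (x, y + 1), Sum.inr (x, y - 1)} := by
  simp [latticeIGraph, iGraph_neighborSet_inr]

/-- The distance in `latticeIGraph`: the first coordinate only changes in the outer layer and the
second only in the inner layer, so to the `ℓ¹`-distance one adds the number of spokes used. -/
def latticeDist : (ℤ × ℤ) ⊕ (ℤ × ℤ) → (ℤ × ℤ) ⊕ (ℤ × ℤ) → ℕ
  | Sum.inl (x, y), Sum.inl (x', y') =>
    (x' - x).natAbs + (y' - y).natAbs + if y' = y then 0 else 2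
  | Sum.inr (x, y), Sum.inr (x', y') =>
    (x' - x).natAbs + (y' - y).natAbs + if x' = x then 0 else 2
  | Sum.inl (x, y), Sum.inr (x', y') => (x' - x).natAbs + (y' - y).natAbs + 1
  | Sum.inr (x, y), Sum.inl (x', y') => (x' - x).natAbs + (y' - y).natAbs + 1

theorem latticeDist_le_of_adj (u : (ℤ × ℤ) ⊕ (ℤ × ℤ)) {v w : (ℤ × ℤ) ⊕ (ℤ × ℤ)}
    (h : latticeIGraph.Adj v w) : latticeDist u w ≤ latticeDist u v + 1 := by
  rw [← mem_neighborSet] at h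
  rcases u with ⟨x, y⟩ | ⟨x, y⟩ <;> rcases v with ⟨x', y'⟩ | ⟨x', y'⟩ <;>
    simp only [latticeIGraph_neighborSet_inl, latticeIGraph_neighborSet_inr,
      Set.mem_insert_iff, Set.mem_singleton_iff] at h <;>
    rcases h with rfl | rfl | rfl <;> simp only [latticeDist] <;> grind

theorem exists_adj_latticeDist_lt {u v : (ℤ × ℤ) ⊕ (ℤ × ℤ)} (hne : v ≠ u) :
    ∃ w, latticeIGraph.Adj v w ∧ latticeDist u w < latticeDist u v := by
  simp_rw [← mem_neighborSet]
  rcases u with ⟨x, y⟩ | ⟨x, y⟩ <;> rcases v with ⟨x', y'⟩ | ⟨x', y'⟩ <;>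
    simp only [latticeIGraph_neighborSet_inl, latticeIGraph_neighborSet_inr,
      Set.mem_insert_iff, Set.mem_singleton_iff, exists_eq_left, or_and_right, exists_or,
      latticeDist] <;> grind

theorem latticeIGraph_connected : latticeIGraph.Connected where
  preconnected u v :=
    let ⟨c, _⟩ := exists_walk_length_le_of_descent (u := v) (fun _ => exists_adj_latticeDist_lt) u
    c.reachable

theorem latticeIGraph_dist (u v : (ℤ × ℤ) ⊕ (ℤ × ℤ)) :
    latticeIGraph.dist u v = latticeDist u v :=
  dist_eq_of_lipschitz_of_descent
    (by rcases u with u | u <;> simp [latticeDist])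
    (fun _ _ => latticeDist_le_of_adj u) (fun _ => exists_adj_latticeDist_lt) v

/-- The sphere of radius four around the outer vertex at the origin of the lattice. -/
noncomputable def latticeSphereFour : Finset ((ℤ × ℤ) ⊕ (ℤ × ℤ)) :=
  let box := Finset.Icc (-4 : ℤ) 4 ×ˢ Finset.Icc (-4 : ℤ) 4
  (box.disjSum box).filter fun q => latticeDist (Sum.inl (0, 0)) q = 4

theorem sphere_eq_coe_latticeSphereFour :
    {q | latticeIGraph.dist (Sum.inl (0, 0)) q = 4} =
      (latticeSphereFour : Set ((ℤ × ℤ) ⊕ (ℤ × ℤ))) := by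
  ext q
  rw [Set.mem_ofPred_eq, latticeIGraph_dist, Finset.mem_coe, latticeSphereFour, Finset.mem_filter,
    iff_and_self]
  rcases q with ⟨x, y⟩ | ⟨x, y⟩ <;>
    simp only [latticeDist, Finset.inl_mem_disjSum, Finset.inr_mem_disjSum, Finset.mem_product,
      Finset.mem_Icc] <;> omega

theorem card_latticeSphereFour : latticeSphereFour.card = 20 := by
  decide +kernel

/-- The lifts `a_{(±1, ±1)}` of the elements of `outerDoubled` to the lattice. -/
def latticeDoubled : Finset ((ℤ × ℤ) ⊕ (ℤ × ℤ)) :=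
  {Sum.inl (-1, -1), Sum.inl (-1, 1), Sum.inl (1, -1), Sum.inl (1, 1)}

theorem latticeDoubled_subset : latticeDoubled ⊆ latticeSphereFour := by
  decide +kernel

theorem ncard_lattice_adj_dist_three (q : (ℤ × ℤ) ⊕ (ℤ × ℤ)) (hq : q ∈ latticeSphereFour) :
    {p | latticeIGraph.Adj (Sum.inl (0, 0)) p ∧ latticeIGraph.dist p q = 3}.ncard =
      if q ∈ latticeDoubled then 2 else 1 := by
  have hcard : ∀ q ∈ latticeSphereFour,
      (({Sum.inl (1, 0), Sum.inl (-1, 0), Sum.inr (0, 0)} : Finset ((ℤ × ℤ) ⊕ (ℤ × ℤ))).filter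
        fun p => latticeDist p q = 3).card = if q ∈ latticeDoubled then 2 else 1 := by
    decide +kernel
  have hcoe : {p | latticeIGraph.Adj (Sum.inl (0, 0)) p ∧ latticeIGraph.dist p q = 3} =
      (({Sum.inl (1, 0), Sum.inl (-1, 0), Sum.inr (0, 0)} : Finset ((ℤ × ℤ) ⊕ (ℤ × ℤ))).filter
        fun p => latticeDist p q = 3 : Set ((ℤ × ℤ) ⊕ (ℤ × ℤ))) := by
    ext p
    simp [← mem_neighborSet, latticeIGraph_neighborSet_inl, latticeIGraph_dist]
  rw [hcoe, Set.ncard_coe_finset, hcard q hq]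

end Lattice

section Projection

variable {A : Type*} [AddCommGroup A] {s t : A}

/-- No nonzero integer vector of `ℓ¹`-norm at most `r` is a relation between `s` and `t`. -/
def NoShortRelation (s t : A) (r : ℕ) : Prop :=
  ∀ x y : ℤ, x.natAbs + y.natAbs ≤ r → x • s + y • t = 0 → x = 0 ∧ y = 0

theorem NoShortRelation.left_ne_zero {r : ℕ} (h : NoShortRelation s t (r + 1)) : s ≠ 0 := by
  rintro rfl
  simpa using h 1 0 (by simp)

theorem NoShortRelation.right_ne_zero {r : ℕ} (h : NoShortRelation s t (r + 1)) : t ≠ 0 := by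
  rintro rfl
  simpa using h 0 1 (by simp)

/-- The projection of the lattice onto the I-graph of `A` with steps `s` and `t`, based at `j`. -/
def latticeProj (s t j : A) : (ℤ × ℤ) ⊕ (ℤ × ℤ) → A ⊕ A :=
  Sum.map (fun v => j + v.1 • s + v.2 • t) (fun v => j + v.1 • s + v.2 • t)

theorem latticeProj_locallySurjective (hs : s ≠ 0) (ht : t ≠ 0) (j : A) :
    LocallySurjective latticeIGraph (iGraph s t) (latticeProj s t j) := by
  rintro (⟨x, y⟩ | ⟨x, y⟩)
  · rw [latticeIGraph_neighborSet_inl]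
    simp only [latticeProj, Sum.map_inl, Sum.map_inr, iGraph_neighborSet_inl hs,
      Set.image_insert_eq, Set.image_singleton, add_zsmul, sub_zsmul, one_zsmul]
    abel_nf
  · rw [latticeIGraph_neighborSet_inr]
    simp only [latticeProj, Sum.map_inl, Sum.map_inr, iGraph_neighborSet_inr ht,
      Set.image_insert_eq, Set.image_singleton, add_zsmul, sub_zsmul, one_zsmul]
    abel_nf

/- Apart from `(4, 0)` and `(-4, 0)`, any two points of the ball in the same layer differ by a
vector of `ℓ¹`-norm at most `6`. -/
theorem latticeProj_injOn_ball (hst : NoShortRelation s t 6)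
    (hs : ∀ x : ℤ, x.natAbs ≤ 8 → x • s = 0 → x = 0) (j : A) :
    Set.InjOn (latticeProj s t j) {q | latticeIGraph.dist (Sum.inl (0, 0)) q ≤ 4} := by
  have hrel {x y x' y' : ℤ} (h : j + x • s + y • t = j + x' • s + y' • t) :
      (x - x') • s + (y - y') • t = 0 := by
    rw [add_assoc, add_assoc, add_right_inj, ← sub_eq_zero] at h
    rw [← h, sub_zsmul, sub_zsmul]
    abel
  rintro (⟨x, y⟩ | ⟨x, y⟩) hp (⟨x', y'⟩ | ⟨x', y'⟩) hq heq <;>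
    simp only [latticeProj, Sum.map_inl, Sum.map_inr, Sum.inl.injEq, Sum.inr.injEq,
      reduceCtorEq, Set.mem_ofPred_eq, latticeIGraph_dist, latticeDist] at hp hq heq ⊢ <;>
    have hxy := hrel heq
  · by_cases hy : y = 0 ∧ y' = 0
    · obtain ⟨rfl, rfl⟩ := hy
      have := hs (x - x') (by omega) (by simpa using hxy)
      exact Prod.ext (by omega) rfl
    · obtain ⟨hx, hy⟩ := hst _ _ (by grind) hxy
      exact Prod.ext (by omega) (by omega)
  · obtain ⟨hx, hy⟩ := hst _ _ (by omega) hxy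
    exact Prod.ext (by omega) (by omega)

end Projection

section GP

variable {n k : ℕ}

/- For `0 < n ≤ 8`, subtracting from `k` its residue of absolute value at most `n / 2 ≤ 4` gives
a forbidden relation. -/
theorem NoShortRelation.eq_zero_of_natAbs_le_eight
    (h : NoShortRelation (1 : ZMod n) (k : ZMod n) 6) (x : ℤ) (hx : x.natAbs ≤ 8)
    (hx0 : x • (1 : ZMod n) = 0) : x = 0 := by
  by_contra hne
  have hdvd : n ∣ x.natAbs := by
    rwa [zsmul_one, ZMod.intCast_zmod_eq_zero_iff_dvd, Int.natCast_dvd] at hx0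
  have hn : n ≤ 8 := (Nat.le_of_dvd (Int.natAbs_pos.2 hne) hdvd).trans hx
  have : NeZero n := ⟨by rintro rfl; simp_all⟩
  have hres := (k : ZMod n).natAbs_valMinAbs_le
  have hrel := h (-(k : ZMod n).valMinAbs) 1 (by omega) (by simp)
  exact one_ne_zero hrel.2

theorem GP_connected (h1 : (1 : ZMod n) ≠ 0) (hk : (k : ZMod n) ≠ 0) : (GP n k).Connected := by
  rw [GP_eq_iGraph]
  refine (latticeProj_locallySurjective h1 hk 0).connected ?_ latticeIGraph_connected
  rintro (i | i)
  · obtain ⟨x, rfl⟩ := ZMod.intCast_surjective i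
    exact ⟨Sum.inl (x, 0), by simp [latticeProj]⟩
  · obtain ⟨x, rfl⟩ := ZMod.intCast_surjective i
    exact ⟨Sum.inr (x, 0), by simp [latticeProj]⟩

theorem outerDoubled_eq_image (j : ZMod n) :
    outerDoubled n k j = latticeProj 1 (k : ZMod n) j '' latticeDoubled := by
  simp only [outerDoubled, latticeDoubled, latticeProj, Finset.coe_insert, Finset.coe_singleton,
    Set.image_insert_eq, Set.image_singleton, Sum.map_inl, neg_zsmul, one_zsmul]
  abel_nf

theorem GP_outer_distance_four_general
    (h : NoShortRelation (1 : ZMod n) (k : ZMod n) 6) :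
    ∀ j : ZMod n,
      {w : GPVertex n | (GP n k).dist (Sum.inl j) w = 4}.ncard = 20 ∧
      (∀ w ∈ outerDoubled n k j, (GP n k).dist (Sum.inl j) w = 4) ∧
      ∀ w : GPVertex n, (GP n k).dist (Sum.inl j) w = 4 →
        ((w ∈ outerDoubled n k j ∧
            {v : GPVertex n | (GP n k).Adj (Sum.inl j) v ∧
              (GP n k).dist v w = 3}.ncard = 2) ∨
         (w ∉ outerDoubled n k j ∧
            {v : GPVertex n | (GP n k).Adj (Sum.inl j) v ∧
              (GP n k).dist v w = 3}.ncard = 1)) := by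
  intro j
  have hf : LocallySurjective latticeIGraph (GP n k) (latticeProj 1 (k : ZMod n) j) :=
    GP_eq_iGraph n k ▸ latticeProj_locallySurjective h.left_ne_zero h.right_ne_zero j
  have hinj := latticeProj_injOn_ball h h.eq_zero_of_natAbs_le_eight j
  have hG := latticeIGraph_connected
  have hH : (GP n k).Connected := GP_connected h.left_ne_zero h.right_ne_zero
  have hbase : Sum.inl j = latticeProj 1 (k : ZMod n) j (Sum.inl (0, 0)) := by simp [latticeProj]
  have hsphere := hf.sphere_eq_image hG hH hinj
  rw [sphere_eq_coe_latticeSphereFour] at hsphere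
  have hdoubled := Finset.coe_subset.2 latticeDoubled_subset
  rw [hbase, outerDoubled_eq_image]
  refine ⟨?_, ?_, fun w hw => ?_⟩
  · rw [hf.ncard_sphere hG hH hinj, sphere_eq_coe_latticeSphereFour, Set.ncard_coe_finset,
      card_latticeSphereFour]
  · exact fun w hw => hsphere.ge (Set.image_mono hdoubled hw)
  · obtain ⟨q, hq, rfl⟩ := hsphere.le hw
    have hball : latticeSphereFour ≤ {q | latticeIGraph.dist (Sum.inl (0, 0)) q ≤ 4} :=
      sphere_eq_coe_latticeSphereFour.ge.trans fun _ => le_of_eq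
    rw [hinj.mem_image_iff (hdoubled.trans hball) (hball hq), Finset.mem_coe,
      hf.ncard_adj_dist hG hH hinj (hball hq), ncard_lattice_adj_dist_three q hq]
    by_cases hq' : q ∈ latticeDoubled <;> simp [hq']

theorem noShortRelation_of_seven_mul (hi : ∃ i, i ∈ ({1, 2, 3} : Set ℕ) ∧ i * n = 7 * k)
    (hbig : 42 ≤ n ∨ (n = 28 ∧ k = 8) ∨ (n = 35 ∧ k = 10) ∨ (n = 35 ∧ k = 15)) :
    NoShortRelation (1 : ZMod n) (k : ZMod n) 6 := by
  obtain ⟨i, hi, hik⟩ := hi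
  simp only [Set.mem_insert_iff, Set.mem_singleton_iff] at hi
  obtain ⟨m, rfl⟩ : 7 ∣ n := by rcases hi with rfl | rfl | rfl <;> omega
  obtain rfl : k = i * m := by linarith
  have hm : 4 ≤ m := by omega
  intro x y hxy hrel
  obtain ⟨a, ha⟩ : ((7 * m : ℕ) : ℤ) ∣ x + y * (i * m) := by
    rw [← ZMod.intCast_zmod_eq_zero_iff_dvd, ← hrel]
    simp
  obtain ⟨z, hz⟩ : ∃ z, z = 7 * a - y * i := ⟨_, rfl⟩
  have hx : x = m * z := by
    rw [hz]
    push_cast at ha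
    linear_combination ha
  have hz1 : z.natAbs ≤ 1 := by
    rw [hx, Int.natAbs_mul, Int.natAbs_natCast] at hxy
    by_contra! hz2
    have : 4 * 2 ≤ m * z.natAbs := Nat.mul_le_mul hm hz2
    omega
  /- If `z = 0` then `7 ∣ y * i`, so `y = 0`. If `z = ±1` then `y * i ≡ ∓1` modulo `7` with
  `|y| ≤ 6 - m`, which is only possible for `(n, k) = (28, 4)`, `(28, 12)` or `(35, 5)`. -/
  obtain rfl | rfl | rfl : z = 0 ∨ z = 1 ∨ z = -1 := by omega
  all_goals rcases hi with rfl | rfl | rfl <;> grind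

end GP

/-- For every outer vertex `a_j`, there are exactly `20` vertices at distance exactly
`4`; the vertices `a_{j-k-1}, a_{j+k-1}, a_{j-k+1}, a_{j+k+1}` are exactly the ones
reached by paths of length `4` through two distinct neighbours of `a_j`, and every
other vertex at distance `4` is reached through a unique neighbour of `a_j`. -/
theorem GP_outer_distance_four (n k : ℕ)
    (hn : 0 < n) (hk : 0 < k)
    (hi : ∃ i, i ∈ ({1, 2, 3} : Set ℕ) ∧ i * n = 7 * k)
    (h2k : 2 * k < n)
    (hbig : 42 ≤ n ∨ (n = 28 ∧ k = 8) ∨ (n = 35 ∧ k = 10) ∨ (n = 35 ∧ k = 15)) :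
    ∀ j : ZMod n,
      {w : GPVertex n | (GP n k).dist (Sum.inl j) w = 4}.ncard = 20 ∧
      (∀ w ∈ outerDoubled n k j, (GP n k).dist (Sum.inl j) w = 4) ∧
      ∀ w : GPVertex n, (GP n k).dist (Sum.inl j) w = 4 →
        ((w ∈ outerDoubled n k j ∧
            {v : GPVertex n | (GP n k).Adj (Sum.inl j) v ∧
              (GP n k).dist v w = 3}.ncard = 2) ∨
         (w ∉ outerDoubled n k j ∧
            {v : GPVertex n | (GP n k).Adj (Sum.inl j) v ∧
              (GP n k).dist v w = 3}.ncard = 1)) :=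
  GP_outer_distance_four_general (noShortRelation_of_seven_mul hi hbig)
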